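/- Let n ≥ 1 be a natural number, let P be a nonempty subset of {1,…,n}, let ρ ∈ (0,1/2) be a real number, and let μ be a probability mass function on {0,1}^n with μ(x) > 0 for every x ∈ {0,1}^n. For β = (β₀,β₁,…,β_n) ∈ ℝ^{n+1} define the threshold classifier ĥ_β(x) = 1{β₀ + Σ_{j=1}^n β_j x_j > 0} and, for λ > 0, the loss L_λ(β) = Σ_{x∈{0,1}^n} μ(x)·(ρ + (1−2ρ)·1{ĥ_β(x) ≠ θ(x)}) + λ·|{j ∈ {1,…,n} : β_j ≠ 0}|, where θ(x) = min_{j∈P} x_j is the AND of the coordinates in P. Then there exists λ > 0 such that every global minimizer β* of L_λ satisfies: β*_j = 0 for every j ∉ P; Σ_{j∈U} β*_j ≤ −β*₀ for every proper subset U ⊊ P; Σ_{j∈P} β*_j > −β*₀; and consequently β*_j > 0 for every j ∈ P. -/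

import Mathlib

open Finset

/-- Threshold classifier `1{β₀ + Σ_j β_j x_j > 0}` as a real value. -/
noncomputable def classifierOut (n : ℕ) (β₀ : ℝ) (β : Fin n → ℝ) (x : Fin n → Bool) : ℝ :=
  if 0 < β₀ + ∑ j, β j * (if x j then 1 else 0) then 1 else 0

/-- AND target: `θ(x) = min_{j ∈ P} x_j`. -/
noncomputable def andTarget (n : ℕ) (P : Finset (Fin n)) (x : Fin n → Bool) : ℝ :=
  if ∀ j ∈ P, x j = true then 1 else 0

/-- The loss `Σ_x μ(x)·(ρ + (1−2ρ)·1{ĥ_β(x) ≠ θ(x)}) + λ·#{j : β_j ≠ 0}`. -/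
noncomputable def lossFn (n : ℕ) (ρ lam : ℝ) (μ : (Fin n → Bool) → ℝ)
    (θ : (Fin n → Bool) → ℝ) (β₀ : ℝ) (β : Fin n → ℝ) : ℝ :=
  (∑ x : Fin n → Bool, μ x *
      (ρ + (1 - 2 * ρ) * (if classifierOut n β₀ β x = θ x then 0 else 1)))
    + lam * ((Finset.univ.filter fun j => β j ≠ 0).card : ℝ)

/-!
The AND of the coordinates in `P` is realized exactly by a threshold classifier with `#P` nonzero
weights. A single misclassified point `x` costs `(1 - 2ρ) μ x`, so as soon as the penalty `λ #P` is
below every such cost, a minimizer makes no error, and among error-free classifiers it has at most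
`#P` nonzero weights. Being error-free means that `P ⊆ U` exactly when the weights indexed by `U`
sum to more than `-β₀`. Comparing `U = P` with `U = P \ {j}` makes every weight on `P` positive, so
the `#P` available nonzero weights are used up on `P`.
-/

lemma exists_pos_forall_mul_lt {α : Type*} [Finite α] {f : α → ℝ} (hf : ∀ a, 0 < f a) (c : ℝ) :
    ∃ r, 0 < r ∧ ∀ a, r * c < f a := by
  cases isEmpty_or_nonempty α
  · exact ⟨1, one_pos, isEmptyElim⟩
  obtain ⟨a₀, ha₀⟩ := Finite.exists_min f
  obtain ⟨r, hr, hlt⟩ := exists_pos_mul_lt (hf a₀) c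
  exact ⟨r, hr, fun a => (mul_comm r c).trans_lt (hlt.trans_le (ha₀ a))⟩

lemma surjective_decide_mem {α : Type*} [Finite α] [DecidableEq α] :
    Function.Surjective fun (U : Finset α) a => decide (a ∈ U) :=
  fun x => ⟨(Set.toFinite {a | x a = true}).toFinset, by simp⟩

section Loss

variable {n : ℕ} {ρ lam : ℝ} {μ θ : (Fin n → Bool) → ℝ} {β₀ γ₀ : ℝ} {β γ : Fin n → ℝ}

lemma lossFn_eq_add_sum_errors :
    lossFn n ρ lam μ θ β₀ β =
      ρ * ∑ x, μ x + ∑ x with classifierOut n β₀ β x ≠ θ x, (1 - 2 * ρ) * μ x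
        + lam * #{j | β j ≠ 0} := by
  simp only [lossFn, mul_add, sum_add_distrib, ← sum_mul, sum_filter, ite_not]
  congr 2
  · exact mul_comm _ _
  · refine sum_congr rfl fun x _ => ?_
    split_ifs <;> ring

lemma lossFn_of_classifierOut_eq (h : classifierOut n β₀ β = θ) :
    lossFn n ρ lam μ θ β₀ β = ρ * ∑ x, μ x + lam * #{j | β j ≠ 0} := by
  simp [lossFn_eq_add_sum_errors, h]

lemma le_lossFn_of_classifierOut_ne (hlam : 0 ≤ lam) (hcost : ∀ x, 0 ≤ (1 - 2 * ρ) * μ x)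
    {x : Fin n → Bool} (hx : classifierOut n β₀ β x ≠ θ x) :
    ρ * ∑ y, μ y + (1 - 2 * ρ) * μ x ≤ lossFn n ρ lam μ θ β₀ β := by
  have herror : (1 - 2 * ρ) * μ x ≤
      ∑ y with classifierOut n β₀ β y ≠ θ y, (1 - 2 * ρ) * μ y :=
    single_le_sum (fun y _ => hcost y) (mem_filter.mpr ⟨mem_univ x, hx⟩)
  have hpenalty : 0 ≤ lam * #{j | β j ≠ 0} := by positivity
  rw [lossFn_eq_add_sum_errors]
  linarith

lemma classifierOut_eq_of_lossFn_le (hlam : 0 ≤ lam) (hγ : classifierOut n γ₀ γ = θ)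
    (hcost : ∀ x, lam * #{j | γ j ≠ 0} < (1 - 2 * ρ) * μ x)
    (hle : lossFn n ρ lam μ θ β₀ β ≤ lossFn n ρ lam μ θ γ₀ γ) :
    classifierOut n β₀ β = θ := by
  by_contra hne
  obtain ⟨x, hx⟩ := Function.ne_iff.mp hne
  have hnonneg : ∀ y, 0 ≤ (1 - 2 * ρ) * μ y := fun y =>
    (by positivity : 0 ≤ lam * #{j | γ j ≠ 0}).trans (hcost y).le
  have herror := le_lossFn_of_classifierOut_ne hlam hnonneg hx
  rw [lossFn_of_classifierOut_eq hγ] at hle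
  linarith [hcost x]

lemma card_support_le_of_lossFn_le (hlam : 0 < lam) (hβ : classifierOut n β₀ β = θ)
    (hγ : classifierOut n γ₀ γ = θ)
    (hle : lossFn n ρ lam μ θ β₀ β ≤ lossFn n ρ lam μ θ γ₀ γ) :
    #{j | β j ≠ 0} ≤ #{j | γ j ≠ 0} := by
  rw [lossFn_of_classifierOut_eq hβ, lossFn_of_classifierOut_eq hγ] at hle
  exact_mod_cast le_of_mul_le_mul_left (le_of_add_le_add_left hle) hlam

end Loss

section AndTarget

variable {n : ℕ} {P : Finset (Fin n)} {β₀ : ℝ} {β : Fin n → ℝ}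

lemma classifierOut_decide_mem (U : Finset (Fin n)) :
    classifierOut n β₀ β (fun j => decide (j ∈ U)) = if -β₀ < ∑ j ∈ U, β j then 1 else 0 := by
  simp [classifierOut, neg_lt_iff_pos_add']

lemma andTarget_decide_mem (U : Finset (Fin n)) :
    andTarget n P (fun j => decide (j ∈ U)) = if P ⊆ U then 1 else 0 := by
  simp [andTarget, subset_iff]

lemma classifierOut_eq_andTarget_iff :
    classifierOut n β₀ β = andTarget n P ↔
      ∀ U : Finset (Fin n), -β₀ < ∑ j ∈ U, β j ↔ P ⊆ U := by
  rw [funext_iff, surjective_decide_mem.forall]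
  refine forall_congr' fun U => ?_
  rw [classifierOut_decide_mem, andTarget_decide_mem]
  by_cases hsum : -β₀ < ∑ j ∈ U, β j <;> by_cases hPU : P ⊆ U <;> simp [hsum, hPU]

lemma classifierOut_indicator_eq_andTarget (P : Finset (Fin n)) :
    classifierOut n (1 / 2 - #P) (fun j => if j ∈ P then 1 else 0) = andTarget n P := by
  refine classifierOut_eq_andTarget_iff.mpr fun U => ?_
  have hsum : ∑ j ∈ U, (if j ∈ P then (1 : ℝ) else 0) = #(P ∩ U) := by
    rw [sum_boole, filter_mem_eq_inter, inter_comm]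
  rw [hsum]
  constructor
  · intro hlt
    have hcard : #P ≤ #(P ∩ U) := by
      have : (#P : ℝ) < #(P ∩ U) + 1 := by linarith
      exact Nat.lt_succ_iff.mp (by exact_mod_cast this)
    exact inter_eq_left.mp (eq_of_subset_of_card_le inter_subset_left hcard)
  · intro hPU
    rw [inter_eq_left.mpr hPU]
    linarith

lemma weight_pos_of_classifierOut_eq_andTarget (h : classifierOut n β₀ β = andTarget n P)
    {j : Fin n} (hj : j ∈ P) : 0 < β j := by
  rw [classifierOut_eq_andTarget_iff] at h
  have hP : -β₀ < ∑ i ∈ P, β i := (h P).mpr Subset.rfl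
  have herase : ¬ -β₀ < ∑ i ∈ P.erase j, β i := (h _).not.mpr (erase_ssubset hj).2
  linarith [add_sum_erase P β hj]

lemma weight_eq_zero_of_classifierOut_eq_andTarget (h : classifierOut n β₀ β = andTarget n P)
    (hcard : #{j | β j ≠ 0} ≤ #P) {j : Fin n} (hj : j ∉ P) : β j = 0 := by
  have hsub : P ⊆ ({j | β j ≠ 0} : Finset (Fin n)) := fun i hi =>
    mem_filter.mpr ⟨mem_univ i, (weight_pos_of_classifierOut_eq_andTarget h hi).ne'⟩
  rw [eq_of_subset_of_card_le hsub hcard] at hj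
  simpa using hj

end AndTarget

theorem and_subgoal_recovery_general {n : ℕ} {P : Finset (Fin n)} {ρ lam : ℝ}
    {μ : (Fin n → Bool) → ℝ} (hlam : 0 < lam) (hcost : ∀ x, lam * #P < (1 - 2 * ρ) * μ x)
    {β₀ : ℝ} {β : Fin n → ℝ}
    (hmin : ∀ (γ₀ : ℝ) (γ : Fin n → ℝ),
      lossFn n ρ lam μ (andTarget n P) β₀ β ≤ lossFn n ρ lam μ (andTarget n P) γ₀ γ) :
    (∀ j, j ∉ P → β j = 0) ∧
    (∀ U : Finset (Fin n), U ⊂ P → ∑ j ∈ U, β j ≤ -β₀) ∧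
    (-β₀ < ∑ j ∈ P, β j) ∧
    (∀ j ∈ P, 0 < β j) := by
  have hind := classifierOut_indicator_eq_andTarget P
  have hsupp : ({j | (if j ∈ P then (1 : ℝ) else 0) ≠ 0} : Finset (Fin n)) = P := by simp
  have hβ : classifierOut n β₀ β = andTarget n P :=
    classifierOut_eq_of_lossFn_le hlam.le hind (by rwa [hsupp]) (hmin _ _)
  have hcard : #{j | β j ≠ 0} ≤ #P := by
    simpa only [hsupp] using card_support_le_of_lossFn_le hlam hβ hind (hmin _ _)
  have hsum := classifierOut_eq_andTarget_iff.mp hβ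
  exact ⟨fun _ => weight_eq_zero_of_classifierOut_eq_andTarget hβ hcard,
    fun U hU => not_lt.mp ((hsum U).not.mpr hU.2), (hsum P).mpr Subset.rfl,
    fun _ => weight_pos_of_classifierOut_eq_andTarget hβ⟩

/-- Any global minimizer of the ℓ₀-penalized loss for an AND target has zero
coefficients outside `P`, satisfies `Σ_{j∈U} β_j ≤ −β₀` for every proper subset
`U ⊊ P` and `Σ_{j∈P} β_j > −β₀`, and has strictly positive coefficients on `P`. -/
theorem and_subgoal_recovery (n : ℕ) (hn : 1 ≤ n) (P : Finset (Fin n)) (hP : P.Nonempty)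
    (ρ : ℝ) (hρ0 : 0 < ρ) (hρ : ρ < 1 / 2)
    (μ : (Fin n → Bool) → ℝ) (hμpos : ∀ x, 0 < μ x) (hμsum : ∑ x, μ x = 1) :
    ∃ lam : ℝ, 0 < lam ∧
      ∀ (β₀ : ℝ) (β : Fin n → ℝ),
        (∀ (γ₀ : ℝ) (γ : Fin n → ℝ),
            lossFn n ρ lam μ (andTarget n P) β₀ β ≤ lossFn n ρ lam μ (andTarget n P) γ₀ γ) →
        (∀ j, j ∉ P → β j = 0) ∧
        (∀ U : Finset (Fin n), U ⊂ P → ∑ j ∈ U, β j ≤ -β₀) ∧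
        (-β₀ < ∑ j ∈ P, β j) ∧
        (∀ j ∈ P, 0 < β j) := by
  obtain ⟨lam, hlam, hcost⟩ := exists_pos_forall_mul_lt
    (fun x => mul_pos (by linarith : 0 < 1 - 2 * ρ) (hμpos x)) #P
  exact ⟨lam, hlam, fun _ _ hmin => and_subgoal_recovery_general hlam hcost hmin⟩
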